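/- arXiv:1503.08544 — 2 statements merged into one kernel-verified Lean document; each statement's English description precedes it below -/
import Mathlib

section
/- Let f : ℝ² → ℝ² be a C^∞ map with f(0)=0 which has corank one at 0. Let φ, ψ : ℝ² → ℝ² be C^∞ maps with φ(0)=ψ(0)=0 whose derivatives at 0 are invertible, and let g = ψ∘f∘φ on a neighborhood of 0. Let η be a null vector field for f and η' a null vector field for g. Then for every integer r ≥ 3, the condition "dλ_f(0) ≠ 0, (η^i λ_f)(0) = 0 for all 1 ≤ i ≤ r−2, and (η^{r−1} λ_f)(0) ≠ 0" holds if and only if the condition "dλ_g(0) ≠ 0, (η'^i λ_g)(0) = 0 for all 1 ≤ i ≤ r−2, and (η'^{r−1} λ_g)(0) ≠ 0" holds. In particular these conditions do not depend on the choice of local coordinates in source and target nor on the choice of null vector field. -/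
open Filter Topology

noncomputable section

/-- Directional derivative of a scalar function. -/
def dop (v : ℝ × ℝ) (g : ℝ × ℝ → ℝ) : ℝ × ℝ → ℝ :=
  fun p => fderiv ℝ g p v

/-- Partial derivative operator in the first coordinate. -/
def pdx : (ℝ × ℝ → ℝ) → ℝ × ℝ → ℝ := dop (1, 0)

/-- Partial derivative operator in the second coordinate. -/
def pdy : (ℝ × ℝ → ℝ) → ℝ × ℝ → ℝ := dop (0, 1)

/-- Taylor coefficient `a_{ij} = ∂_x^i ∂_y^j g(0,0) / (i! j!)` of `g` at the origin. -/
def tcoeff (g : ℝ × ℝ → ℝ) (i j : ℕ) : ℝ :=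
  (pdx^[i] (pdy^[j] g)) 0 / (Nat.factorial i * Nat.factorial j)

/-- The Jacobian determinant `λ_f` of a map `f : ℝ² → ℝ²`. -/
def jacDet (f : ℝ × ℝ → ℝ × ℝ) (p : ℝ × ℝ) : ℝ :=
  (fderiv ℝ f p (1, 0)).1 * (fderiv ℝ f p (0, 1)).2 -
    (fderiv ℝ f p (1, 0)).2 * (fderiv ℝ f p (0, 1)).1

/-- `f` has corank one at `0` : the derivative of `f` at `0` has rank one. -/
def CorankOne (f : ℝ × ℝ → ℝ × ℝ) : Prop :=
  LinearMap.rank ((fderiv ℝ f 0).toLinearMap) = 1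

/-- `η` is a null vector field for `f` near `0`. -/
def IsNullVF (f η : ℝ × ℝ → ℝ × ℝ) : Prop :=
  η 0 ≠ 0 ∧ ∃ U ∈ 𝓝 (0 : ℝ × ℝ),
    ContDiffOn ℝ (⊤ : ℕ∞) η U ∧ ∀ p ∈ U, jacDet f p = 0 → fderiv ℝ f p (η p) = 0

/-- The derivative `(ηg)(p) = Dg(p)(η(p))` of `g` along the vector field `η`. -/
def etaD (η : ℝ × ℝ → ℝ × ℝ) (g : ℝ × ℝ → ℝ) : ℝ × ℝ → ℝ :=
  fun p => fderiv ℝ g p (η p)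

/-- The iterated derivative `η^k g` along the vector field `η`. -/
def etaIter (η : ℝ × ℝ → ℝ × ℝ) : ℕ → (ℝ × ℝ → ℝ) → ℝ × ℝ → ℝ
  | 0, g => g
  | k + 1, g => etaD η (etaIter η k g)

/-- The Hessian matrix of second partial derivatives of `g` at `0`. -/
def hess (g : ℝ × ℝ → ℝ) : Matrix (Fin 2) (Fin 2) ℝ :=
  !![pdx (pdx g) 0, pdx (pdy g) 0; pdy (pdx g) 0, pdy (pdy g) 0]

/-- `A^r`-equivalence of the `r`-jets at `0` of two map-germs `(ℝ²,0) → (ℝ²,0)`. -/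
def JetEquiv (r : ℕ) (f g : ℝ × ℝ → ℝ × ℝ) : Prop :=
  ∃ φ ψ : ℝ × ℝ → ℝ × ℝ,
    ContDiff ℝ (⊤ : ℕ∞) φ ∧ ContDiff ℝ (⊤ : ℕ∞) ψ ∧ φ 0 = 0 ∧ ψ 0 = 0 ∧
    Function.Bijective (⇑(fderiv ℝ φ 0)) ∧ Function.Bijective (⇑(fderiv ℝ ψ 0)) ∧
    ∀ i ≤ r, iteratedFDeriv ℝ i (ψ ∘ f ∘ φ) 0 = iteratedFDeriv ℝ i g 0

/-- `A`-equivalence of two map-germs `(ℝ²,0) → (ℝ²,0)`. -/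
def AEquiv (f g : ℝ × ℝ → ℝ × ℝ) : Prop :=
  ∃ φ ψ : ℝ × ℝ → ℝ × ℝ,
    ContDiff ℝ (⊤ : ℕ∞) φ ∧ ContDiff ℝ (⊤ : ℕ∞) ψ ∧ φ 0 = 0 ∧ ψ 0 = 0 ∧
    Function.Bijective (⇑(fderiv ℝ φ 0)) ∧ Function.Bijective (⇑(fderiv ℝ ψ 0)) ∧
    ∀ᶠ p in 𝓝 (0 : ℝ × ℝ), ψ (f (φ p)) = g p

/-- `f` has the form `(x, g(x,y))` where `g` is `C^∞` and the Taylor coefficients of `g`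
of total degree `< N` at the origin are prescribed by `P`. -/
def HasForm (f : ℝ × ℝ → ℝ × ℝ) (g : ℝ × ℝ → ℝ) (N : ℕ) (P : ℕ → ℕ → ℝ) : Prop :=
  ContDiff ℝ (⊤ : ℕ∞) g ∧ (∀ p, f p = (p.1, g p)) ∧
    ∀ i j, i + j < N → tcoeff g i j = P i j

/-- Smooth germ at the origin. -/
def Sm {E : Type*} [NormedAddCommGroup E] [NormedSpace ℝ E] (F : ℝ × ℝ → E) : Prop :=
  ∀ᶠ p in 𝓝 (0 : ℝ × ℝ), ContDiffAt ℝ (⊤ : ℕ∞) F p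

section smooth
variable {E G : Type*} [NormedAddCommGroup E] [NormedSpace ℝ E]
  [NormedAddCommGroup G] [NormedSpace ℝ G]

theorem Sm.congr {F H : ℝ × ℝ → E} (hF : Sm F) (h : H =ᶠ[𝓝 0] F) : Sm H := by
  filter_upwards [hF, h.eventuallyEq_nhds] with p h1 h2
  exact h1.congr_of_eventuallyEq h2

theorem ContDiff.sm {F : ℝ × ℝ → E} (hF : ContDiff ℝ (⊤ : ℕ∞) F) : Sm F :=
  Eventually.of_forall fun _ => hF.contDiffAt

theorem Sm.add {F H : ℝ × ℝ → E} (hF : Sm F) (hH : Sm H) : Sm (F + H) := by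
  filter_upwards [hF, hH] with p h1 h2 using h1.add h2

theorem Sm.mul {F H : ℝ × ℝ → ℝ} (hF : Sm F) (hH : Sm H) : Sm (F * H) := by
  filter_upwards [hF, hH] with p h1 h2 using h1.mul h2

theorem Sm.neg {F : ℝ × ℝ → E} (hF : Sm F) : Sm (-F) := by
  filter_upwards [hF] with p h1 using h1.neg

theorem Sm.sub {F H : ℝ × ℝ → E} (hF : Sm F) (hH : Sm H) : Sm (F - H) := by
  filter_upwards [hF, hH] with p h1 h2 using h1.sub h2

theorem Sm.const (c : E) : Sm (fun _ => c) := contDiff_const.sm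

theorem Sm.fst {F : ℝ × ℝ → ℝ × ℝ} (hF : Sm F) : Sm (fun p => (F p).1) := by
  filter_upwards [hF] with p h1 using h1.fst

theorem Sm.snd {F : ℝ × ℝ → ℝ × ℝ} (hF : Sm F) : Sm (fun p => (F p).2) := by
  filter_upwards [hF] with p h1 using h1.snd

theorem Sm.prodMk {F H : ℝ × ℝ → ℝ} (hF : Sm F) (hH : Sm H) : Sm (fun p => (F p, H p)) := by
  filter_upwards [hF, hH] with p h1 h2 using h1.prodMk h2

theorem Sm.fderiv {F : ℝ × ℝ → E} (hF : Sm F) : Sm (fderiv ℝ F) := by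
  filter_upwards [hF] with p h1
  exact h1.fderiv_right (by simp)

theorem Sm.clm_apply {F : ℝ × ℝ → E →L[ℝ] G} {v : ℝ × ℝ → E} (hF : Sm F) (hv : Sm v) :
    Sm (fun p => F p (v p)) := by
  filter_upwards [hF, hv] with p h1 h2 using h1.clm_apply h2

theorem Sm.self {F : ℝ × ℝ → E} (hF : Sm F) : ContDiffAt ℝ (⊤ : ℕ∞) F 0 :=
  Eventually.self_of_nhds hF

theorem Sm.cont {F : ℝ × ℝ → E} (hF : Sm F) : ContinuousAt F 0 := hF.self.continuousAt

theorem Sm.diff {F : ℝ × ℝ → E} (hF : Sm F) : ∀ᶠ p in 𝓝 0, DifferentiableAt ℝ F p := by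
  filter_upwards [hF] with p h1 using h1.differentiableAt (by simp)

theorem Sm.inv {F : ℝ × ℝ → ℝ} (hF : Sm F) (h0 : F 0 ≠ 0) : Sm (fun p => (F p)⁻¹) := by
  filter_upwards [hF, hF.cont.eventually_ne h0] with p h1 h2 using h1.inv h2

theorem Sm.pow {F : ℝ × ℝ → ℝ} (hF : Sm F) (n : ℕ) : Sm (F ^ n) := by
  filter_upwards [hF] with p h1 using h1.pow n

theorem Sm.etaD {X : ℝ × ℝ → ℝ × ℝ} {F : ℝ × ℝ → ℝ} (hX : Sm X) (hF : Sm F) : Sm (etaD X F) :=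
  hF.fderiv.clm_apply hX

theorem Sm.etaIter {X : ℝ × ℝ → ℝ × ℝ} {F : ℝ × ℝ → ℝ} (hX : Sm X) (hF : Sm F) (n : ℕ) :
    Sm (etaIter X n F) := by
  induction n with
  | zero => exact hF
  | succ n ih => exact hX.etaD ih

theorem Sm.comp {φ : ℝ × ℝ → ℝ × ℝ} {F : ℝ × ℝ → E} (hF : Sm F) (hφ : Sm φ) (h0 : φ 0 = 0) :
    Sm (F ∘ φ) := by
  have h := hφ.cont.tendsto
  rw [h0] at h
  filter_upwards [hφ, h.eventually hF] with p h1 h2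
  exact ContDiffAt.comp p h2 h1

end smooth

theorem etaD_congr {X : ℝ × ℝ → ℝ × ℝ} {F H : ℝ × ℝ → ℝ} (h : F =ᶠ[𝓝 0] H) :
    etaD X F =ᶠ[𝓝 0] etaD X H := by
  filter_upwards [h.eventuallyEq_nhds] with p hp
  simp [etaD, hp.fderiv_eq]

theorem etaIter_congr {X : ℝ × ℝ → ℝ × ℝ} {F H : ℝ × ℝ → ℝ} (h : F =ᶠ[𝓝 0] H) (n : ℕ) :
    etaIter X n F =ᶠ[𝓝 0] etaIter X n H := by
  induction n with
  | zero => exact h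
  | succ n ih => exact etaD_congr ih

theorem etaIter_succ' (X : ℝ × ℝ → ℝ × ℝ) (F : ℝ × ℝ → ℝ) (n : ℕ) :
    etaIter X (n + 1) F = etaIter X n (etaD X F) := by
  induction n with
  | zero => rfl
  | succ n ih => rw [etaIter, ih]; rfl

theorem etaD_add {X : ℝ × ℝ → ℝ × ℝ} {F H : ℝ × ℝ → ℝ} (hF : Sm F) (hH : Sm H) :
    etaD X (F + H) =ᶠ[𝓝 0] etaD X F + etaD X H := by
  filter_upwards [hF.diff, hH.diff] with p h1 h2
  simp [etaD, fderiv_add h1 h2]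

theorem etaD_mul {X : ℝ × ℝ → ℝ × ℝ} {F H : ℝ × ℝ → ℝ} (hF : Sm F) (hH : Sm H) :
    etaD X (F * H) =ᶠ[𝓝 0] F * etaD X H + etaD X F * H := by
  filter_upwards [hF.diff, hH.diff] with p h1 h2
  simp [etaD, fderiv_mul h1 h2]
  ring

/-- Germs in the span of `t j`, `j < i`, over smooth germs. -/
inductive Low (t : ℕ → ℝ × ℝ → ℝ) (i : ℕ) : (ℝ × ℝ → ℝ) → Prop
  | zero : Low t i 0
  | base (c : ℝ × ℝ → ℝ) (j : ℕ) (hc : Sm c) (hj : j < i) : Low t i (c * t j)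
  | add (F H : ℝ × ℝ → ℝ) : Low t i F → Low t i H → Low t i (F + H)
  | congr (F H : ℝ × ℝ → ℝ) : Low t i F → H =ᶠ[𝓝 0] F → Low t i H

theorem Low.sm {t : ℕ → ℝ × ℝ → ℝ} (ht : ∀ i, Sm (t i)) {i : ℕ} {F : ℝ × ℝ → ℝ}
    (h : Low t i F) : Sm F := by
  induction h with
  | zero => exact Sm.const 0
  | base c j hc hj => exact hc.mul (ht j)
  | add F H _ _ h1 h2 => exact h1.add h2
  | congr F H _ h1 h2 => exact h2.congr h1

theorem Low.eq_zero {t : ℕ → ℝ × ℝ → ℝ} {i : ℕ} {F : ℝ × ℝ → ℝ}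
    (h : Low t i F) (h0 : ∀ j < i, t j 0 = 0) : F 0 = 0 := by
  induction h with
  | zero => rfl
  | base c j hc hj => simp [h0 j hj]
  | add F H _ _ h1 h2 => simp [h1, h2]
  | congr F H _ h1 h2 => rw [h1.self_of_nhds, h2]

theorem Low.step {T a : ℝ × ℝ → ℝ} {X Y Z : ℝ × ℝ → ℝ × ℝ} (hT : Sm T) (ha : Sm a)
    (hX : Sm X) (hY : Sm Y) (hZ : Sm Z)
    (hXY : ∀ᶠ p in 𝓝 0, X p = a p • Y p + T p • Z p) {i : ℕ} {F : ℝ × ℝ → ℝ}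
    (h : Low (fun j => etaIter Y j T) i F) :
    Low (fun j => etaIter Y j T) (i + 1) (etaD X F) := by
  have ht : ∀ j, Sm (etaIter Y j T) := fun j => hY.etaIter hT j
  induction h with
  | zero =>
    have : etaD X 0 = 0 := by
      funext p
      simp [etaD]
    rw [this]; exact Low.zero
  | base c j hc hj =>
    have h1 := Low.base (t := fun j => etaIter Y j T) (i := i + 1) (c * a) (j + 1)
      (hc.mul ha) (by omega)
    have h2 := Low.base (t := fun j => etaIter Y j T) (i := i + 1)
      (c * etaD Z (etaIter Y j T)) 0 (hc.mul (hZ.etaD (ht j))) (by omega)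
    have h3 := Low.base (t := fun j => etaIter Y j T) (i := i + 1) (etaD X c) j
      (hX.etaD hc) (by omega)
    refine Low.congr _ _ ((h1.add _ _ h2).add _ _ h3) ?_
    filter_upwards [etaD_mul (X := X) hc (ht j), hXY] with p h4 h5
    rw [h4]
    simp only [Pi.add_apply, Pi.mul_apply, etaIter]
    simp only [etaD, h5, map_add, map_smul, smul_eq_mul]
    ring
  | add F H h1 h2 h3 h4 =>
    exact Low.congr _ _ (h3.add _ _ h4) (etaD_add (h1.sm ht) (h2.sm ht))
  | congr F H h1 h2 h3 => exact Low.congr _ _ h3 (etaD_congr h2)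

theorem Low.mono {t : ℕ → ℝ × ℝ → ℝ} {i : ℕ} {F : ℝ × ℝ → ℝ}
    (h : Low t i F) : Low t (i + 1) F := by
  induction h with
  | zero => exact Low.zero
  | base c j hc hj => exact Low.base c j hc (by omega)
  | add F H _ _ h1 h2 => exact h1.add _ _ h2
  | congr F H _ h1 h2 => exact Low.congr _ _ h2 h1

theorem tri {T a u : ℝ × ℝ → ℝ} {X Y Z : ℝ × ℝ → ℝ × ℝ} (hT : Sm T) (ha : Sm a) (hu : Sm u)
    (hX : Sm X) (hY : Sm Y) (hZ : Sm Z)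
    (hXY : ∀ᶠ p in 𝓝 0, X p = a p • Y p + T p • Z p) (i : ℕ) :
    ∃ L, Low (fun j => etaIter Y j T) i L ∧
      etaIter X i (u * T) =ᶠ[𝓝 0] u * a ^ i * etaIter Y i T + L := by
  have ht : ∀ j, Sm (etaIter Y j T) := fun j => hY.etaIter hT j
  induction i with
  | zero =>
    refine ⟨0, Low.zero, ?_⟩
    simp [etaIter]
  | succ i ih =>
    obtain ⟨L, hL, hE⟩ := ih
    have hc : Sm (u * a ^ i) := hu.mul (ha.pow i)
    have h1 := Low.base (t := fun j => etaIter Y j T) (i := i + 1)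
      (u * a ^ i * etaD Z (etaIter Y i T)) 0 (hc.mul (hZ.etaD (ht i))) (by omega)
    have h2 := Low.base (t := fun j => etaIter Y j T) (i := i + 1) (etaD X (u * a ^ i)) i
      (hX.etaD hc) (by omega)
    have h3 := hL.step hT ha hX hY hZ hXY
    refine ⟨_, (h1.add _ _ h2).add _ _ h3, ?_⟩
    refine (etaD_congr hE).trans ?_
    refine (etaD_add (hc.mul (ht i)) (hL.sm ht)).trans ?_
    filter_upwards [etaD_mul (X := X) hc (ht i), hXY] with p h4 h5
    rw [Pi.add_apply, h4]
    simp only [Pi.add_apply, Pi.mul_apply, Pi.pow_apply, etaIter]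
    simp only [etaD, h5, map_add, map_smul, smul_eq_mul]
    ring

/-- `F` has order exactly `m` along `X` at the origin. -/
def VOrd (X : ℝ × ℝ → ℝ × ℝ) (F : ℝ × ℝ → ℝ) (m : ℕ) : Prop :=
  (∀ i < m, etaIter X i F 0 = 0) ∧ etaIter X m F 0 ≠ 0

theorem VOrd.congr_iff {X X' : ℝ × ℝ → ℝ × ℝ} {F F' : ℝ × ℝ → ℝ}
    (h : ∀ i, etaIter X i F 0 = etaIter X' i F' 0) (m : ℕ) : VOrd X F m ↔ VOrd X' F' m := by
  simp [VOrd, h]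

theorem ord_tri {T a u : ℝ × ℝ → ℝ} {X Y Z : ℝ × ℝ → ℝ × ℝ} (hT : Sm T) (ha : Sm a) (hu : Sm u)
    (hX : Sm X) (hY : Sm Y) (hZ : Sm Z)
    (hXY : ∀ᶠ p in 𝓝 0, X p = a p • Y p + T p • Z p) (ha0 : a 0 ≠ 0) (hu0 : u 0 ≠ 0) (m : ℕ) :
    VOrd X (u * T) m ↔ VOrd Y T m := by
  have key : ∀ i, (∀ j < i, etaIter Y j T 0 = 0) →
      etaIter X i (u * T) 0 = u 0 * a 0 ^ i * etaIter Y i T 0 := by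
    intro i hi
    obtain ⟨L, hL, hE⟩ := tri hT ha hu hX hY hZ hXY i
    rw [hE.self_of_nhds]
    simp [hL.eq_zero hi]
  have hne : ∀ i, u 0 * a 0 ^ i ≠ 0 := fun i => mul_ne_zero hu0 (pow_ne_zero _ ha0)
  constructor
  · rintro ⟨h1, h2⟩
    have h3 : ∀ j, j < m → etaIter Y j T 0 = 0 := by
      intro j
      induction j using Nat.strong_induction_on with
      | _ j ih =>
        intro hj
        have h4 := key j (fun k hk => ih k hk (by omega))
        rw [h1 j hj] at h4
        exact (mul_eq_zero.1 h4.symm).resolve_left (hne j)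
    refine ⟨h3, fun h => h2 ?_⟩
    rw [key m h3, h, mul_zero]
  · rintro ⟨h1, h2⟩
    refine ⟨fun i hi => ?_, ?_⟩
    · rw [key i (fun j hj => h1 j (by omega)), h1 i hi, mul_zero]
    · rw [key m h1]
      exact mul_ne_zero (hne m) h2

theorem fderiv_coord (L : ℝ × ℝ →L[ℝ] ℝ) (v : ℝ × ℝ) :
    L v = v.1 * L (1, 0) + v.2 * L (0, 1) := by
  have : v = v.1 • ((1 : ℝ), (0 : ℝ)) + v.2 • ((0 : ℝ), (1 : ℝ)) := by
    ext <;> simp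
  calc L v = L (v.1 • ((1 : ℝ), (0 : ℝ)) + v.2 • ((0 : ℝ), (1 : ℝ))) := by rw [← this]
    _ = _ := by rw [map_add, map_smul, map_smul, smul_eq_mul, smul_eq_mul]

/-- Hamiltonian field. -/
def ham (l : ℝ × ℝ → ℝ) : ℝ × ℝ → ℝ × ℝ :=
  fun p => (-(fderiv ℝ l p (0, 1)), fderiv ℝ l p (1, 0))

theorem Sm.ham {l : ℝ × ℝ → ℝ} (hl : Sm l) : Sm (ham l) :=
  ((hl.fderiv.clm_apply (Sm.const _)).neg).prodMk (hl.fderiv.clm_apply (Sm.const _))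

theorem etaD_ham (l : ℝ × ℝ → ℝ) (p : ℝ × ℝ) : fderiv ℝ l p (ham l p) = 0 := by
  rw [fderiv_coord]; simp [ham]; ring

theorem ord_ham {l : ℝ × ℝ → ℝ} {η : ℝ × ℝ → ℝ × ℝ} (hl : Sm l) (hη : Sm η) (hη0 : η 0 ≠ 0)
    (hdl : fderiv ℝ l 0 ≠ 0) (h0 : etaD η l 0 = 0) (m : ℕ) :
    VOrd η (etaD η l) m ↔ VOrd (ham l) (etaD η l) m := by
  have hx : Sm (fun p => fderiv ℝ l p (1, 0)) := hl.fderiv.clm_apply (Sm.const _)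
  have hy : Sm (fun p => fderiv ℝ l p (0, 1)) := hl.fderiv.clm_apply (Sm.const _)
  set lx := fun p => fderiv ℝ l p (1, 0) with hlx
  set ly := fun p => fderiv ℝ l p (0, 1) with hly
  have hN : Sm (lx * lx + ly * ly) := (hx.mul hx).add (hy.mul hy)
  have hN0 : (lx * lx + ly * ly) 0 ≠ 0 := by
    intro h
    simp only [Pi.add_apply, Pi.mul_apply] at h
    have h1 : lx 0 = 0 := by nlinarith [mul_self_nonneg (lx 0), mul_self_nonneg (ly 0)]
    have h2 : ly 0 = 0 := by nlinarith [mul_self_nonneg (lx 0), mul_self_nonneg (ly 0)]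
    apply hdl
    ext1
    · ext; simpa using h1
    · ext; simpa using h2
  have hNi := hN.inv hN0
  set N := lx * lx + ly * ly with hNdef
  have ha : Sm ((fun p => (η p).2) * lx - (fun p => (η p).1) * ly) :=
    (hη.snd.mul hx).sub (hη.fst.mul hy)
  have hZ : Sm (fun p => ((lx * fun p => (N p)⁻¹) p, (ly * fun p => (N p)⁻¹) p)) :=
    (hx.mul hNi).prodMk (hy.mul hNi)
  have := ord_tri (u := fun _ => 1) (hη.etaD hl) (ha.mul hNi) (Sm.const 1) hη hl.ham hZ ?_ ?_
    one_ne_zero m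
  · rw [← this]
    have : ((fun _ => 1) * etaD η l : ℝ × ℝ → ℝ) = etaD η l := by funext p; simp
    rw [this]
  · filter_upwards [hN.cont.eventually_ne hN0] with p hp
    have e : etaD η l p = (η p).1 * lx p + (η p).2 * ly p := fderiv_coord _ _
    have hN' : N p = lx p * lx p + ly p * ly p := rfl
    rw [e]
    ext
    · simp only [ham, Pi.mul_apply, Pi.sub_apply, Prod.fst_add, Prod.smul_fst, smul_eq_mul]
      change _ = _ * -(ly p) + _
      field_simp
      rw [hN']; ring
    · simp only [ham, Pi.mul_apply, Pi.sub_apply, Prod.snd_add, Prod.smul_snd, smul_eq_mul]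
      change _ = _ * (lx p) + _
      field_simp
      rw [hN']; ring
  · have e : etaD η l 0 = (η 0).1 * lx 0 + (η 0).2 * ly 0 := fderiv_coord _ _
    rw [h0] at e
    simp only [Pi.mul_apply, Pi.sub_apply]
    refine mul_ne_zero (fun h => hη0 ?_) (inv_ne_zero hN0)
    have hN' : N 0 = lx 0 * lx 0 + ly 0 * ly 0 := rfl
    have h1 : (η 0).1 * N 0 = 0 := by
      rw [hN']; linear_combination (-lx 0) * e - ly 0 * h
    have h2 : (η 0).2 * N 0 = 0 := by
      rw [hN']; linear_combination (-ly 0) * e + lx 0 * h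
    ext
    · exact (mul_eq_zero.1 h1).resolve_right hN0
    · exact (mul_eq_zero.1 h2).resolve_right hN0

theorem ham_vanish {l h : ℝ × ℝ → ℝ} (hl : Sm l) (hh : Sm h) (hl0 : l 0 = 0)
    (hv : ∀ᶠ p in 𝓝 0, l p = 0 → h p = 0) (i : ℕ) : etaIter (ham l) i h 0 = 0 := by
  have hW := hl.ham
  obtain ⟨γ, hγ0, ε, hε, hγ⟩ := (hW.self.of_le (m := 1) (by
    norm_cast)).exists_forall_mem_closedBall_exists_eq_forall_mem_Ioo_hasDerivAt₀ (t₀ := 0)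
  have hγd : ∀ᶠ t in 𝓝 (0 : ℝ), HasDerivAt γ (ham l (γ t)) t := by
    filter_upwards [Ioo_mem_nhds (a := 0 - ε) (b := 0 + ε) (x := (0:ℝ)) (by linarith) (by linarith)] with t ht
    exact hγ t ht
  have hγc : Tendsto γ (𝓝 0) (𝓝 0) := by
    have := hγd.self_of_nhds.continuousAt.tendsto
    rwa [hγ0] at this
  have hcomp : ∀ F : ℝ × ℝ → ℝ, Sm F →
      ∀ᶠ t in 𝓝 (0 : ℝ), HasDerivAt (F ∘ γ) (etaD (ham l) F (γ t)) t := by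
    intro F hF
    filter_upwards [hγd, hγc.eventually hF.diff] with t h1 h2
    exact h2.hasFDerivAt.comp_hasDerivAt t h1
  have hlγ : ∀ᶠ t in 𝓝 (0 : ℝ), l (γ t) = 0 := by
    obtain ⟨δ, hδ, hb⟩ := Metric.eventually_nhds_iff_ball.1 (hcomp l hl)
    filter_upwards [Metric.ball_mem_nhds 0 hδ] with t ht
    have := (convex_ball (0:ℝ) δ).is_const_of_fderivWithin_eq_zero (𝕜 := ℝ) (f := l ∘ γ)
      (fun x hx => (hb x hx).differentiableAt.differentiableWithinAt)
      (fun x hx => by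
        rw [fderivWithin_of_isOpen Metric.isOpen_ball hx]
        have h1 := (hb x hx)
        rw [show etaD (ham l) l (γ x) = 0 from etaD_ham _ _] at h1
        rw [h1.hasFDerivAt.fderiv]; ext; simp) ht (Metric.mem_ball_self hδ)
    simpa [hγ0, hl0] using this
  have main : ∀ i, ∀ᶠ t in 𝓝 (0 : ℝ), etaIter (ham l) i h (γ t) = 0 := by
    intro i
    induction i with
    | zero =>
      filter_upwards [hlγ, hγc.eventually hv] with t h1 h2 using h2 h1
    | succ i ih =>
      filter_upwards [hcomp _ (hW.etaIter hh i), ih.eventually_nhds] with t h1 h2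
      have h3 : HasDerivAt (etaIter (ham l) i h ∘ γ) 0 t :=
        (hasDerivAt_const t (0 : ℝ)).congr_of_eventuallyEq h2
      exact h1.unique h3
  have := (main i).self_of_nhds
  rwa [hγ0] at this

theorem etaIter_add {X : ℝ × ℝ → ℝ × ℝ} {F H : ℝ × ℝ → ℝ} (hX : Sm X) (hF : Sm F) (hH : Sm H)
    (i : ℕ) : etaIter X i (F + H) =ᶠ[𝓝 0] etaIter X i F + etaIter X i H := by
  induction i with
  | zero => rfl
  | succ i ih => exact (etaD_congr ih).trans (etaD_add (hX.etaIter hF i) (hX.etaIter hH i))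

theorem ord_succ {X : ℝ × ℝ → ℝ × ℝ} {l : ℝ × ℝ → ℝ} (hl0 : l 0 = 0) (m : ℕ) :
    VOrd X l (m + 1) ↔ VOrd X (etaD X l) m := by
  simp only [VOrd, ← etaIter_succ']
  refine and_congr_left fun _ => ⟨fun h i hi => h _ (by omega), fun h i hi => ?_⟩
  cases i with
  | zero => exact hl0
  | succ i => exact h i (by omega)

/-- Change of null vector field. -/
theorem ord_change {l c : ℝ × ℝ → ℝ} {ζ η : ℝ × ℝ → ℝ × ℝ} (hl : Sm l) (hζ : Sm ζ) (hη : Sm η)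
    (hc : Sm c) (hc0 : c 0 ≠ 0) (hζ0 : ζ 0 ≠ 0) (hη0 : η 0 ≠ 0) (hl0 : l 0 = 0)
    (hdl : fderiv ℝ l 0 ≠ 0) (hp : ∀ᶠ p in 𝓝 0, l p = 0 → ζ p = c p • η p) (m : ℕ) :
    VOrd ζ l (m + 2) ↔ VOrd η l (m + 2) := by
  have hD : ∀ᶠ p in 𝓝 0, l p = 0 → etaD ζ l p = c p * etaD η l p := by
    filter_upwards [hp] with p h1 h2
    simp [etaD, h1 h2]
  have hD0 := hD.self_of_nhds hl0
  rw [ord_succ hl0, ord_succ hl0]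
  by_cases h0 : etaD η l 0 = 0
  · rw [h0, mul_zero] at hD0
    rw [ord_ham hl hζ hζ0 hdl hD0, ord_ham hl hη hη0 hdl h0]
    rw [← ord_tri (u := c) (a := fun _ => 1) (Z := fun _ => 0) (hη.etaD hl) (Sm.const 1) hc
      hl.ham hl.ham (Sm.const 0) (by simp) one_ne_zero hc0]
    apply VOrd.congr_iff
    intro i
    have hs := (hζ.etaD hl).sub (hc.mul (hη.etaD hl))
    have h1 := ham_vanish hl hs hl0 (by
      filter_upwards [hD] with p h1 h2
      simp [h1 h2]) i
    have h2 := (etaIter_add hl.ham hs (hc.mul (hη.etaD hl)) i).self_of_nhds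
    rw [sub_add_cancel] at h2
    rw [h2, Pi.add_apply, h1, zero_add]
  · have h1 : etaD ζ l 0 ≠ 0 := by rw [hD0]; exact mul_ne_zero hc0 h0
    constructor
    · intro h; exact absurd (h.1 0 (by omega)) h1
    · intro h; exact absurd (h.1 0 (by omega)) h0

theorem jac_comp (A B : ℝ × ℝ →L[ℝ] ℝ × ℝ) :
    ((A.comp B) (1, 0)).1 * ((A.comp B) (0, 1)).2 - ((A.comp B) (1, 0)).2 * ((A.comp B) (0, 1)).1 =
    ((A (1, 0)).1 * (A (0, 1)).2 - (A (1, 0)).2 * (A (0, 1)).1) *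
    ((B (1, 0)).1 * (B (0, 1)).2 - (B (1, 0)).2 * (B (0, 1)).1) := by
  have h1 : ∀ v, (A v).1 = v.1 * (A (1, 0)).1 + v.2 * (A (0, 1)).1 := fun v =>
    fderiv_coord ((ContinuousLinearMap.fst ℝ ℝ ℝ).comp A) v
  have h2 : ∀ v, (A v).2 = v.1 * (A (1, 0)).2 + v.2 * (A (0, 1)).2 := fun v =>
    fderiv_coord ((ContinuousLinearMap.snd ℝ ℝ ℝ).comp A) v
  simp only [ContinuousLinearMap.comp_apply]
  rw [h1 (B (1, 0)), h1 (B (0, 1)), h2 (B (1, 0)), h2 (B (0, 1))]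
  ring

theorem jac_ne_zero (A : ℝ × ℝ →L[ℝ] ℝ × ℝ) (hA : Function.Bijective A) :
    (A (1, 0)).1 * (A (0, 1)).2 - (A (1, 0)).2 * (A (0, 1)).1 ≠ 0 := by
  let e := ContinuousLinearEquiv.ofBijective A (LinearMap.ker_eq_bot.2 hA.1)
    (LinearMap.range_eq_top.2 hA.2)
  have h := jac_comp A (e.symm : ℝ × ℝ →L[ℝ] ℝ × ℝ)
  have h1 : A.comp (e.symm : ℝ × ℝ →L[ℝ] ℝ × ℝ) = ContinuousLinearMap.id ℝ _ := by
    ext1 <;> ext1 <;> exact e.apply_symm_apply _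
  rw [h1] at h
  intro h0
  rw [h0] at h
  simp at h

theorem jac_eq_zero_of_null (A : ℝ × ℝ →L[ℝ] ℝ × ℝ) (v : ℝ × ℝ) (hv : v ≠ 0) (h : A v = 0) :
    (A (1, 0)).1 * (A (0, 1)).2 - (A (1, 0)).2 * (A (0, 1)).1 = 0 := by
  have h1 : (A v).1 = v.1 * (A (1, 0)).1 + v.2 * (A (0, 1)).1 :=
    fderiv_coord ((ContinuousLinearMap.fst ℝ ℝ ℝ).comp A) v
  have h2 : (A v).2 = v.1 * (A (1, 0)).2 + v.2 * (A (0, 1)).2 :=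
    fderiv_coord ((ContinuousLinearMap.snd ℝ ℝ ℝ).comp A) v
  rw [h] at h1 h2
  simp only [Prod.fst_zero, Prod.snd_zero] at h1 h2
  by_contra hne
  apply hv
  ext
  · refine (mul_eq_zero.1 ?_).resolve_right hne
    linear_combination (-(A (0, 1)).2) * h1 + (A (0, 1)).1 * h2
  · refine (mul_eq_zero.1 ?_).resolve_right hne
    linear_combination ((A (1, 0)).2) * h1 - (A (1, 0)).1 * h2

theorem parallel (A : ℝ × ℝ →L[ℝ] ℝ × ℝ) (hA : A ≠ 0) (v w : ℝ × ℝ) (hv : A v = 0) (hw : A w = 0) :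
    v.1 * w.2 - v.2 * w.1 = 0 := by
  by_contra hne
  apply hA
  have key : ∀ x, A x = 0 := by
    intro x
    have : (v.1 * w.2 - v.2 * w.1) • x =
        (x.1 * w.2 - x.2 * w.1) • v + (v.1 * x.2 - v.2 * x.1) • w := by
      ext <;> simp <;> ring
    have h2 := congrArg A this
    rw [map_smul, map_add, map_smul, map_smul, hv, hw] at h2
    simpa [hne] using h2
  ext1 <;> ext <;> simp [key]

theorem Sm.jacDet {f : ℝ × ℝ → ℝ × ℝ} (hf : Sm f) : Sm (jacDet f) := by
  have h1 := hf.fderiv.clm_apply (Sm.const ((1 : ℝ), (0 : ℝ)))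
  have h2 := hf.fderiv.clm_apply (Sm.const ((0 : ℝ), (1 : ℝ)))
  exact (h1.fst.mul h2.snd).sub (h1.snd.mul h2.fst)

theorem IsNullVF.sm {f η : ℝ × ℝ → ℝ × ℝ} (h : IsNullVF f η) : Sm η := by
  obtain ⟨_, U, hU, h1, _⟩ := h
  filter_upwards [eventually_mem_nhds_iff.2 hU] with p hp using h1.contDiffAt hp

theorem corank_jac {f : ℝ × ℝ → ℝ × ℝ} (h : CorankOne f) : jacDet f 0 = 0 := by
  have hni : ¬ Function.Injective (fderiv ℝ f 0).toLinearMap := by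
    intro hi
    have h1 := LinearMap.finrank_range_of_inj hi
    have h2 := congrArg Cardinal.toNat h
    rw [LinearMap.rank] at h2
    change Module.finrank ℝ _ = _ at h2
    rw [h1] at h2
    simp at h2
  rw [← LinearMap.ker_eq_bot, ← ne_eq, Submodule.ne_bot_iff] at hni
  obtain ⟨v, hv, hv0⟩ := hni
  exact jac_eq_zero_of_null _ v hv0 hv

theorem corank_ne {f : ℝ × ℝ → ℝ × ℝ} (h : CorankOne f) : fderiv ℝ f 0 ≠ 0 := by
  intro h0
  rw [CorankOne, h0] at h
  simp at h

theorem cond_iff {X : ℝ × ℝ → ℝ × ℝ} {l : ℝ × ℝ → ℝ} (hl0 : l 0 = 0) (r : ℕ) (hr : 3 ≤ r) :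
    ((∀ i, 1 ≤ i → i ≤ r - 2 → etaIter X i l 0 = 0) ∧ etaIter X (r - 1) l 0 ≠ 0) ↔
      VOrd X l ((r - 3) + 2) := by
  rw [show r - 3 + 2 = r - 1 by omega, VOrd]
  refine and_congr_left fun _ => ⟨fun h i hi => ?_, fun h i _ hi => h i (by omega)⟩
  rcases Nat.eq_zero_or_pos i with rfl | h1
  · exact hl0
  · exact h i h1 (by omega)

/-- Independence of the `η^i λ` conditions from coordinates and choice of null vector field. -/
theorem stmt0 (f g φ ψ η η' : ℝ × ℝ → ℝ × ℝ)
    (hf : ContDiff ℝ (⊤ : ℕ∞) f) (hf0 : f 0 = 0) (hcr : CorankOne f)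
    (hφ : ContDiff ℝ (⊤ : ℕ∞) φ) (hψ : ContDiff ℝ (⊤ : ℕ∞) ψ)
    (hφ0 : φ 0 = 0) (hψ0 : ψ 0 = 0)
    (hφ' : Function.Bijective (⇑(fderiv ℝ φ 0))) (hψ' : Function.Bijective (⇑(fderiv ℝ ψ 0)))
    (hg : ∀ᶠ p in 𝓝 (0 : ℝ × ℝ), g p = ψ (f (φ p)))
    (hη : IsNullVF f η) (hη' : IsNullVF g η') :
    ∀ r : ℕ, 3 ≤ r →
      ((fderiv ℝ (jacDet f) 0 ≠ 0 ∧
          (∀ i, 1 ≤ i → i ≤ r - 2 → etaIter η i (jacDet f) 0 = 0) ∧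
          etaIter η (r - 1) (jacDet f) 0 ≠ 0) ↔
        (fderiv ℝ (jacDet g) 0 ≠ 0 ∧
          (∀ i, 1 ≤ i → i ≤ r - 2 → etaIter η' i (jacDet g) 0 = 0) ∧
          etaIter η' (r - 1) (jacDet g) 0 ≠ 0)) := by
  intro r hr
  have sf := hf.sm
  have sφ := hφ.sm
  have sψ := hψ.sm
  have tφ : Tendsto φ (𝓝 0) (𝓝 0) := by
    have := sφ.cont.tendsto; rwa [hφ0] at this
  have sη := hη.sm
  have sη' := hη'.sm
  have sl := sf.jacDet
  have hl0 := corank_jac hcr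
  have sg : Sm g := ((hψ.comp (hf.comp hφ)).sm).congr hg
  have hfd : ∀ᶠ p in 𝓝 (0 : ℝ × ℝ), fderiv ℝ g p =
      (fderiv ℝ ψ (f (φ p))).comp ((fderiv ℝ f (φ p)).comp (fderiv ℝ φ p)) := by
    filter_upwards [Filter.EventuallyEq.eventuallyEq_nhds hg] with p hp
    rw [hp.fderiv_eq]
    have d1 : DifferentiableAt ℝ φ p := hφ.differentiable (by simp) p
    have d2 : DifferentiableAt ℝ f (φ p) := hf.differentiable (by simp) _
    have d3 : DifferentiableAt ℝ ψ (f (φ p)) := hψ.differentiable (by simp) _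
    exact (d3.hasFDerivAt.comp p (d2.hasFDerivAt.comp p d1.hasFDerivAt)).fderiv
  -- the unit
  set lt : ℝ × ℝ → ℝ := jacDet f ∘ φ with hlt
  have slt : Sm lt := sl.comp sφ hφ0
  have hlt0 : lt 0 = 0 := by simp [hlt, hφ0, hl0]
  set u : ℝ × ℝ → ℝ := (jacDet ψ ∘ (f ∘ φ)) * jacDet φ with hu
  have su : Sm u := by
    have h1 : Sm (f ∘ φ) := (hf.comp hφ).sm
    exact (sψ.jacDet.comp h1 (by simp [hφ0, hf0])).mul sφ.jacDet
  have hu0 : u 0 ≠ 0 := by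
    simp only [hu, Pi.mul_apply, Function.comp_apply, hφ0, hf0]
    exact mul_ne_zero (jac_ne_zero _ hψ') (jac_ne_zero _ hφ')
  have hjg : jacDet g =ᶠ[𝓝 0] u * lt := by
    filter_upwards [hfd] with p hp
    rw [jacDet, hp, jac_comp, jac_comp]
    simp only [hu, hlt, Pi.mul_apply, Function.comp_apply, jacDet]
    ring
  have hjg0 : jacDet g 0 = 0 := by rw [hjg.self_of_nhds, Pi.mul_apply, hlt0, mul_zero]
  -- differential conditions
  have hdlt : fderiv ℝ lt 0 = (fderiv ℝ (jacDet f) 0).comp (fderiv ℝ φ 0) := by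
    have h1 := sl.diff.self_of_nhds
    rw [← hφ0] at h1
    have := fderiv_comp (0 : ℝ × ℝ) h1 sφ.diff.self_of_nhds
    rwa [hφ0] at this
  have hdlt_iff : fderiv ℝ (jacDet f) 0 ≠ 0 ↔ fderiv ℝ lt 0 ≠ 0 := by
    rw [hdlt, not_iff_not]
    constructor
    · intro h; rw [h]; simp
    · intro h
      refine ContinuousLinearMap.ext fun v => ?_
      obtain ⟨w, rfl⟩ := hφ'.2 v
      exact DFunLike.congr_fun h w
  have hdg : fderiv ℝ (jacDet g) 0 = u 0 • fderiv ℝ lt 0 := by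
    rw [hjg.fderiv_eq, fderiv_mul su.diff.self_of_nhds slt.diff.self_of_nhds, hlt0]
    simp
  have hdg_iff : fderiv ℝ (jacDet g) 0 ≠ 0 ↔ fderiv ℝ lt 0 ≠ 0 := by
    rw [hdg]; simp [hu0]
  rw [cond_iff hl0 r hr, cond_iff hjg0 r hr, hdlt_iff, hdg_iff]
  refine and_congr_right fun hd => ?_
  -- the pulled back field
  let e := ContinuousLinearEquiv.ofBijective (fderiv ℝ φ 0) (LinearMap.ker_eq_bot.2 hφ'.1)
    (LinearMap.range_eq_top.2 hφ'.2)
  have he : (e : ℝ × ℝ →L[ℝ] ℝ × ℝ) = fderiv ℝ φ 0 := rfl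
  have hnear : ∀ᶠ p in 𝓝 (0 : ℝ × ℝ),
      ∃ e' : (ℝ × ℝ) ≃L[ℝ] ℝ × ℝ, (e' : ℝ × ℝ →L[ℝ] ℝ × ℝ) = fderiv ℝ φ p := by
    have h1 := ContinuousLinearEquiv.nhds e
    rw [he] at h1
    exact sφ.fderiv.cont.eventually h1
  let ζ : ℝ × ℝ → ℝ × ℝ := fun p => (fderiv ℝ φ p).inverse (η (φ p))
  have sζ : Sm ζ := by
    have h1 : Sm (fun p => (fderiv ℝ φ p).inverse) := by
      filter_upwards [hnear, sφ.fderiv] with p h2 h3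
      obtain ⟨e', he'⟩ := h2
      have h4 : ContDiffAt ℝ (⊤ : ℕ∞) ContinuousLinearMap.inverse (fderiv ℝ φ p) := by
        rw [← he']; exact contDiffAt_map_inverse e'
      exact h4.comp p h3
    exact h1.clm_apply (sη.comp sφ hφ0)
  have hζ : ∀ᶠ p in 𝓝 (0 : ℝ × ℝ), fderiv ℝ φ p (ζ p) = η (φ p) := by
    filter_upwards [hnear] with p h2
    obtain ⟨e', he'⟩ := h2
    simp only [ζ, ← he', ContinuousLinearMap.inverse_equiv]
    exact e'.apply_symm_apply _
  have hζ0 : ζ 0 ≠ 0 := by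
    intro h
    have h1 := hζ.self_of_nhds
    rw [h, hφ0, map_zero] at h1
    exact hη.1 h1.symm
  have hpull : ∀ i, etaIter ζ i lt =ᶠ[𝓝 0] etaIter η i (jacDet f) ∘ φ := by
    intro i
    induction i with
    | zero => rfl
    | succ i ih =>
      refine (etaD_congr ih).trans ?_
      filter_upwards [hζ, tφ.eventually (sη.etaIter sl i).diff, sφ.diff] with p h1 h2 h3
      change fderiv ℝ _ p (ζ p) = fderiv ℝ _ (φ p) (η (φ p))
      rw [fderiv_comp p h2 h3, ContinuousLinearMap.comp_apply, h1]
  have step1 : VOrd η (jacDet f) (r - 3 + 2) ↔ VOrd ζ lt (r - 3 + 2) := by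
    apply VOrd.congr_iff
    intro i
    rw [(hpull i).self_of_nhds, Function.comp_apply, hφ0]
  have step3 : VOrd η' (jacDet g) (r - 3 + 2) ↔ VOrd η' lt (r - 3 + 2) := by
    rw [← ord_tri (u := u) (a := fun _ => 1) (Z := fun _ => 0) slt (Sm.const 1) su
      sη' sη' (Sm.const 0) (by simp) one_ne_zero hu0]
    exact VOrd.congr_iff (fun i => (etaIter_congr hjg i).self_of_nhds) _
  rw [step1, step3]
  -- parallel on the singular set
  have hg0 : fderiv ℝ g 0 ≠ 0 := by
    intro h
    have h1 := hfd.self_of_nhds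
    rw [h, hφ0, hf0] at h1
    apply corank_ne hcr
    refine ContinuousLinearMap.ext fun v => ?_
    obtain ⟨w, rfl⟩ := hφ'.2 v
    have h2 := DFunLike.congr_fun h1 w
    simp only [ContinuousLinearMap.comp_apply, ContinuousLinearMap.zero_apply] at h2
    apply hψ'.1
    rw [← h2]; simp
  have hpar : ∀ᶠ p in 𝓝 (0 : ℝ × ℝ), lt p = 0 →
      (ζ p).1 * (η' p).2 - (ζ p).2 * (η' p).1 = 0 := by
    obtain ⟨_, U, hU, _, hU2⟩ := hη
    obtain ⟨_, U', hU', _, hU2'⟩ := hη'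
    filter_upwards [hfd, hjg, hζ, tφ.eventually hU, hU', sg.fderiv.cont.eventually_ne hg0]
      with p h1 h2 h3 h4 h5 h6 h7
    refine parallel _ h6 _ _ ?_ (hU2' p h5 ?_)
    · rw [h1]
      simp only [ContinuousLinearMap.comp_apply]
      rw [h3, hU2 _ h4 h7, map_zero]
    · rw [h2, Pi.mul_apply, h7, mul_zero]
  have hη'0 := hη'.1
  have sM : Sm ((fun p => (η' p).1) * (fun p => (η' p).1) + (fun p => (η' p).2) * (fun p => (η' p).2)) :=
    (sη'.fst.mul sη'.fst).add (sη'.snd.mul sη'.snd)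
  set M := (fun p => (η' p).1) * (fun p => (η' p).1) + (fun p => (η' p).2) * (fun p => (η' p).2)
    with hM
  have hM' : ∀ p, M p = (η' p).1 * (η' p).1 + (η' p).2 * (η' p).2 := fun p => rfl
  have hM0 : M 0 ≠ 0 := by
    intro h
    rw [hM'] at h
    apply hη'0
    ext
    · simp only [Prod.fst_zero]
      nlinarith [mul_self_nonneg (η' 0).1, mul_self_nonneg (η' 0).2]
    · simp only [Prod.snd_zero]
      nlinarith [mul_self_nonneg (η' 0).1, mul_self_nonneg (η' 0).2]
  have sc : Sm (((fun p => (ζ p).1) * (fun p => (η' p).1) +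
      (fun p => (ζ p).2) * (fun p => (η' p).2)) * (fun p => (M p)⁻¹)) :=
    ((sζ.fst.mul sη'.fst).add (sζ.snd.mul sη'.snd)).mul (sM.inv hM0)
  set c := ((fun p => (ζ p).1) * (fun p => (η' p).1) +
      (fun p => (ζ p).2) * (fun p => (η' p).2)) * (fun p => (M p)⁻¹) with hc
  have hc' : ∀ p, c p = ((ζ p).1 * (η' p).1 + (ζ p).2 * (η' p).2) * (M p)⁻¹ := fun p => rfl
  have hcp : ∀ᶠ p in 𝓝 (0 : ℝ × ℝ), lt p = 0 → ζ p = c p • η' p := by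
    filter_upwards [hpar, sM.cont.eventually_ne hM0] with p h1 h2 h3
    have h4 := h1 h3
    rw [hc']
    ext
    · rw [Prod.smul_fst, smul_eq_mul]
      field_simp
      rw [hM']
      linear_combination (η' p).2 * h4
    · rw [Prod.smul_snd, smul_eq_mul]
      field_simp
      rw [hM']
      linear_combination (-(η' p).1) * h4
  have hc0 : c 0 ≠ 0 := by
    intro h
    apply hζ0
    rw [hcp.self_of_nhds hlt0, h, zero_smul]
  exact ord_change slt sζ sη' sc hc0 hζ0 hη'0 hlt0 hd hcp _
end
end

section
/- For all real numbers c and d, the polynomial maps F(x,y) = (x, xy + y⁵ + cy⁶ + dy⁷) and G(x,y) = (x, xy + y⁵ + (d − (5/8)c²)y⁷) have A⁷-equivalent 7-jets at the origin: j⁷F(0) ∼_{A⁷} j⁷G(0). -/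
open Filter Topology

noncomputable section

/-- third-order remainder of `s ^ 2` -/
def rB (a Y T s : ℝ) : ℝ := s * T + T * (1 + a * Y + a ^ 2 * Y ^ 2) + 2 * a ^ 3 + a ^ 4 * Y

/-- third-order remainder of `s ^ 4` -/
def rC (a Y T s : ℝ) : ℝ :=
  12 * a ^ 3 + 9 * a ^ 4 * Y + rB a Y T s * (s ^ 2 + 1 + 2 * a * Y + 3 * a ^ 2 * Y ^ 2)

/-- second-order remainder of `s ^ 5` -/
def rD (a Y T s : ℝ) : ℝ :=
  14 * a ^ 2 + Y * rC a Y T s + a * Y * (10 * a ^ 2 + Y * rC a Y T s) + (a ^ 2 + Y * T) * s ^ 4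

/-- first-order remainder of `s ^ 6` -/
def rE (a Y T s : ℝ) : ℝ :=
  (a + a ^ 2 * Y + Y ^ 2 * T) * (1 + s + s ^ 2 + s ^ 3 + s ^ 4 + s ^ 5)

/-- remainder polynomial -/
def remQ (a d Y T s : ℝ) : ℝ := rC a Y T s - 4 * a * rD a Y T s + d * rE a Y T s

theorem remQ_spec (a d Y T s : ℝ) (hs : s = 1 + a * Y + a ^ 2 * Y ^ 2 + Y ^ 3 * T) :
    s ^ 4 - 4 * a * Y * s ^ 5 + d * Y ^ 2 * s ^ 6 =
      1 + (d - 10 * a ^ 2) * Y ^ 2 + Y ^ 3 * remQ a d Y T s := by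
  have h2 : s ^ 2 = 1 + 2 * a * Y + 3 * a ^ 2 * Y ^ 2 + Y ^ 3 * rB a Y T s := by
    unfold rB
    linear_combination (s + (1 + a * Y + a ^ 2 * Y ^ 2)) * hs
  have h4 : s ^ 4 = 1 + 4 * a * Y + 10 * a ^ 2 * Y ^ 2 + Y ^ 3 * rC a Y T s := by
    unfold rC
    linear_combination (s ^ 2 + (1 + 2 * a * Y + 3 * a ^ 2 * Y ^ 2)) * h2
  have h5 : s ^ 5 = 1 + 5 * a * Y + Y ^ 2 * rD a Y T s := by
    unfold rD
    linear_combination s ^ 4 * hs + (1 + a * Y) * h4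
  have h6 : s ^ 6 = 1 + Y * rE a Y T s := by
    unfold rE
    linear_combination (1 + s + s ^ 2 + s ^ 3 + s ^ 4 + s ^ 5) * hs
  unfold remQ
  linear_combination h4 - 4 * a * Y * h5 + d * Y ^ 2 * h6

theorem pow_vanish (k : ℕ) : ∀ i < k,
    iteratedFDeriv ℝ i (fun p : ℝ × ℝ => p.2 ^ k) 0 = 0 := by
  induction k with
  | zero => intro i hi; omega
  | succ k ih =>
    intro i hi
    have h := norm_iteratedFDeriv_mul_le (𝕜 := ℝ) (N := (⊤ : ℕ∞)) (n := i)
      (f := fun p : ℝ × ℝ => p.2) (g := fun p : ℝ × ℝ => p.2 ^ k)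
      (by fun_prop) (by fun_prop) 0 (by exact_mod_cast le_top)
    have h0 : ∑ j ∈ Finset.range (i + 1), (i.choose j : ℝ) *
        ‖iteratedFDeriv ℝ j (fun p : ℝ × ℝ => p.2) 0‖ *
        ‖iteratedFDeriv ℝ (i - j) (fun p : ℝ × ℝ => p.2 ^ k) 0‖ = 0 := by
      apply Finset.sum_eq_zero
      intro j hj
      rw [Finset.mem_range] at hj
      rcases Nat.eq_zero_or_pos j with rfl | hj0
      · simp
      · rw [ih (i - j) (by omega)]; simp
    rw [h0] at h
    have h1 := norm_le_zero_iff.mp h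
    simpa [pow_succ'] using h1

theorem smul_vanish (k : ℕ) (A : ℝ × ℝ → ℝ × ℝ) (hA : ContDiff ℝ (⊤ : ℕ∞) A) (i : ℕ) (hi : i < k) :
    iteratedFDeriv ℝ i (fun p : ℝ × ℝ => p.2 ^ k • A p) 0 = 0 := by
  have h := norm_iteratedFDeriv_smul_le (𝕜 := ℝ) (N := (⊤ : ℕ∞)) (n := i)
      (f := fun p : ℝ × ℝ => p.2 ^ k) (g := A)
      (by fun_prop) hA 0 (by exact_mod_cast le_top)
  have h0 : ∑ j ∈ Finset.range (i + 1), (i.choose j : ℝ) *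
        ‖iteratedFDeriv ℝ j (fun p : ℝ × ℝ => p.2 ^ k) 0‖ *
        ‖iteratedFDeriv ℝ (i - j) A 0‖ = 0 := by
    apply Finset.sum_eq_zero
    intro j hj
    rw [Finset.mem_range] at hj
    rw [pow_vanish k j (by omega)]; simp
  rw [h0] at h
  exact norm_le_zero_iff.mp h

/-- truncated geometric series tail -/
def tT (a Y : ℝ) : ℝ := a ^ 3 + a ^ 4 * Y + a ^ 5 * Y ^ 2 + a ^ 6 * Y ^ 3

/-- truncated geometric series -/
def tS (a Y : ℝ) : ℝ := 1 + a * Y + a ^ 2 * Y ^ 2 + Y ^ 3 * tT a Y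

theorem tS_spec (a Y : ℝ) : (1 - a * Y) * tS a Y = 1 - a ^ 7 * Y ^ 7 := by
  unfold tS tT; ring

/-- the source polynomial -/
def hh (a d y : ℝ) : ℝ := y ^ 5 + (-4 * a) * y ^ 6 + d * y ^ 7

/-- the source diffeomorphism -/
def phi (a d : ℝ) (p : ℝ × ℝ) : ℝ × ℝ :=
  ((1 - a * p.2) * (p.1 - a * hh a d (p.2 * tS a p.2)), p.2 * tS a p.2)

/-- the error term -/
def err (a d : ℝ) (p : ℝ × ℝ) : ℝ × ℝ :=
  (-(a ^ 8 * (p.1 - a * hh a d (p.2 * tS a p.2))),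
   -(a ^ 7 * (p.1 - a * hh a d (p.2 * tS a p.2))) + remQ a d p.2 (tT a p.2) (tS a p.2)
    - a ^ 7 * p.2 ^ 4 * (tS a p.2 ^ 4 - 4 * a * p.2 * tS a p.2 ^ 5 + d * p.2 ^ 2 * tS a p.2 ^ 6))

theorem key1 (a d x Y : ℝ) :
    (phi a d (x, Y)).1 + a * ((phi a d (x, Y)).1 * (phi a d (x, Y)).2
      + hh a d (phi a d (x, Y)).2) = x + Y ^ 8 * (err a d (x, Y)).1 := by
  have h := tS_spec a Y
  simp only [phi, err]
  generalize hh a d (Y * tS a Y) = H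
  linear_combination (a * Y * (x - a * H)) * h

theorem key2 (a d x Y : ℝ) :
    (phi a d (x, Y)).1 * (phi a d (x, Y)).2
      + hh a d (phi a d (x, Y)).2 =
      x * Y + Y ^ 5 + (d - 10 * a ^ 2) * Y ^ 7 + Y ^ 8 * (err a d (x, Y)).2 := by
  have h := tS_spec a Y
  have hr := remQ_spec a d Y (tT a Y) (tS a Y) rfl
  simp only [phi, err]
  generalize remQ a d Y (tT a Y) (tS a Y) = R at *
  generalize tS a Y = s at *
  have hH : hh a d (Y * s) = Y ^ 5 * s * (s ^ 4 - 4 * a * Y * s ^ 5 + d * Y ^ 2 * s ^ 6) := by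
    unfold hh; ring
  generalize hh a d (Y * s) = H at *
  generalize s ^ 4 - 4 * a * Y * s ^ 5 + d * Y ^ 2 * s ^ 6 = V at *
  linear_combination (Y * (x - a * H) + Y ^ 5 * V) * h + (1 - a * Y) * hH + Y ^ 5 * hr

theorem phi_smooth (a d : ℝ) : ContDiff ℝ (⊤ : ℕ∞) (phi a d) := by
  unfold phi hh tS tT; fun_prop

theorem err_smooth (a d : ℝ) : ContDiff ℝ (⊤ : ℕ∞) (err a d) := by
  unfold err remQ rE rD rC rB hh tS tT; fun_prop

theorem phi_deriv (a d : ℝ) : fderiv ℝ (phi a d) 0 = ContinuousLinearMap.id ℝ (ℝ × ℝ) := by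
  have e : phi a d = fun p => p + (p.2 • (fun p : ℝ × ℝ =>
      ((-a * p.1 - (1 - a * p.2) * a * p.2 ^ 4 * tS a p.2 ^ 5 *
        (1 - 4 * a * p.2 * tS a p.2 + d * p.2 ^ 2 * tS a p.2 ^ 2),
        p.2 * (a + a ^ 2 * p.2 + p.2 ^ 2 * tT a p.2)) : ℝ × ℝ)) p) := by
    funext p
    obtain ⟨x, y⟩ := p
    ext
    · simp only [phi, hh, Prod.fst_add, Prod.smul_fst, smul_eq_mul]; ring
    · simp only [phi, tS, Prod.snd_add, Prod.smul_snd, smul_eq_mul]; ring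
  rw [e]
  generalize hA : (fun p : ℝ × ℝ =>
      ((-a * p.1 - (1 - a * p.2) * a * p.2 ^ 4 * tS a p.2 ^ 5 *
        (1 - 4 * a * p.2 * tS a p.2 + d * p.2 ^ 2 * tS a p.2 ^ 2),
        p.2 * (a + a ^ 2 * p.2 + p.2 ^ 2 * tT a p.2)) : ℝ × ℝ)) = A
  have hAd : DifferentiableAt ℝ A 0 := by
    rw [← hA]; unfold tS tT; fun_prop
  have hA0 : A 0 = 0 := by rw [← hA]; simp
  have h2 : HasFDerivAt (fun p : ℝ × ℝ => p.2) (ContinuousLinearMap.snd ℝ ℝ ℝ) 0 :=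
    hasFDerivAt_snd
  have h3 := (hasFDerivAt_id (𝕜 := ℝ) (0 : ℝ × ℝ)).add (h2.smul hAd.hasFDerivAt)
  refine (HasFDerivAt.fderiv h3).trans ?_
  ext <;> simp [hA0]

/-- the linear target change -/
def psiL (a : ℝ) : ℝ × ℝ →L[ℝ] ℝ × ℝ :=
  (ContinuousLinearMap.fst ℝ ℝ ℝ + a • ContinuousLinearMap.snd ℝ ℝ ℝ).prod
    (ContinuousLinearMap.snd ℝ ℝ ℝ)

theorem psiL_bij (a : ℝ) : Function.Bijective (psiL a) := by
  rw [Function.bijective_iff_has_inverse]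
  refine ⟨fun p => (p.1 - a * p.2, p.2), ?_, ?_⟩ <;> intro p <;> simp [psiL]

theorem stmt2 (c d : ℝ) :
    JetEquiv 7 (fun p => (p.1, p.1 * p.2 + p.2 ^ 5 + c * p.2 ^ 6 + d * p.2 ^ 7))
      (fun p => (p.1, p.1 * p.2 + p.2 ^ 5 + (d - 5 / 8 * c ^ 2) * p.2 ^ 7)) := by
  obtain ⟨a, rfl⟩ : ∃ a, c = -4 * a := ⟨-c / 4, by ring⟩
  refine ⟨phi a d, psiL a, phi_smooth a d, (psiL a).contDiff, by simp [phi, hh], by simp,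
    by rw [phi_deriv]; exact Function.bijective_id,
    by rw [ContinuousLinearMap.fderiv]; exact psiL_bij a, ?_⟩
  intro i hi
  have e : (psiL a ∘ (fun p : ℝ × ℝ => ((p.1,
      p.1 * p.2 + p.2 ^ 5 + (-4 * a) * p.2 ^ 6 + d * p.2 ^ 7) : ℝ × ℝ)) ∘ phi a d) =
      (fun p : ℝ × ℝ => ((p.1,
        p.1 * p.2 + p.2 ^ 5 + (d - 5 / 8 * (-4 * a) ^ 2) * p.2 ^ 7) : ℝ × ℝ)) +
      (fun p : ℝ × ℝ => p.2 ^ 8 • err a d p) := by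
    funext p
    obtain ⟨x, y⟩ := p
    have h1 := key1 a d x y
    have h2 := key2 a d x y
    unfold hh at h1 h2
    ext
    · simp [psiL]
      linear_combination h1
    · simp [psiL]
      linear_combination h2
  rw [e, iteratedFDeriv_add_apply, smul_vanish 8 _ (err_smooth a d) i (by omega), add_zero]
  · exact ContDiff.contDiffAt (by fun_prop)
  · have h8 : ContDiff ℝ (⊤ : ℕ∞) (fun p : ℝ × ℝ => p.2 ^ 8) := by fun_prop
    exact ((h8.smul (err_smooth a d)).of_le (by exact_mod_cast le_top)).contDiffAt
end
end
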